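/- arXiv:2507.01761 — 3 statements merged into one kernel-verified Lean document; each statement's English description precedes it below -/
import Mathlib

section
/- Let Z_1, …, Z_{N−1+M} be independent real-valued random variables, each with the same atomless Borel probability law, and fix integers k, with 1 ≤ k ≤ N − 1 and 1 ≤ k ≤ M. Let R denote the k-th smallest element of the multiset {Z_1, …, Z_{N−1}}, and let C = #{j ∈ {1, …, M} : Z_{N−1+j} ≤ R}. Then E[min(C / k, 1)] = ∑_{j=1}^M min(j/k, 1) · C(M, j) · B(k + j, M − j + N − k) / B(k, N − k), where C(M, j) is the binomial coefficient and B is the Beta function. -/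
open MeasureTheory ProbabilityTheory Finset

/-- The `k`-th smallest element of a multiset of real numbers
(the `k`-th entry of the multiset sorted in nondecreasing order). -/
noncomputable def kthSmallest (s : Multiset ℝ) (k : ℕ) : ℝ :=
  (Multiset.sort s (· ≤ ·)).getD (k - 1) 0

/-- The Beta function `B(x, y) = ∫₀¹ t^(x-1) (1-t)^(y-1) dt`. -/
noncomputable def Beta (x y : ℝ) : ℝ :=
  ∫ t in (0:ℝ)..1, t ^ (x - 1) * (1 - t) ^ (y - 1)

/-- indices with value below that of `i` -/
noncomputable def belowSet {ι : Type*} [Fintype ι] (x : ι → ℝ) (i : ι) : Finset ι :=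
  Finset.univ.filter (fun l => x l < x i)

lemma belowSet_card_injective {ι : Type*} [Fintype ι] (x : ι → ℝ)
    (hx : Function.Injective x) : Function.Injective (fun i => (belowSet x i).card) := by
  have key : ∀ i j, x i < x j → (belowSet x i).card < (belowSet x j).card := by
    intro i j hij
    apply Finset.card_lt_card
    rw [Finset.ssubset_iff_of_subset]
    · exact ⟨i, by simp [belowSet, hij], by simp [belowSet]⟩
    · intro l hl
      simp only [belowSet, Finset.mem_filter, Finset.mem_univ, true_and] at hl ⊢
      linarith
  intro i j h
  rcases lt_trichotomy (x i) (x j) with h1 | h1 | h1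
  · exact absurd h (key _ _ h1).ne
  · exact hx h1
  · exact absurd h (key _ _ h1).ne'

lemma notMem_belowSet {ι : Type*} [Fintype ι] (x : ι → ℝ) (i : ι) : i ∉ belowSet x i := by
  simp [belowSet]

lemma exists_unique_rank {ι : Type*} [Fintype ι] (x : ι → ℝ)
    (hx : Function.Injective x) (u : ℕ) (hu : u < Fintype.card ι) :
    ∃ i, ∀ j, (belowSet x j).card = u ↔ j = i := by
  classical
  have hlt : ∀ i, (belowSet x i).card < Fintype.card ι := by
    intro i
    apply Finset.card_lt_univ_of_notMem (notMem_belowSet x i)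
  let f : ι → Fin (Fintype.card ι) := fun i => ⟨_, hlt i⟩
  have hf : Function.Injective f := by
    intro i j h
    apply belowSet_card_injective x hx
    simpa [f] using h
  have hb : Function.Bijective f := by
    rw [Fintype.bijective_iff_injective_and_card]
    exact ⟨hf, by simp⟩
  obtain ⟨i, hi⟩ := hb.2 ⟨u, hu⟩
  have hi' : (belowSet x i).card = u := by simpa [f] using congrArg Fin.val hi
  refine ⟨i, fun j => ⟨fun h => ?_, fun h => by rw [h, hi']⟩⟩
  apply belowSet_card_injective x hx
  simp [h, hi']

lemma kth_eq {n : ℕ} (x : Fin n → ℝ) (hx : Function.Injective x) (k : ℕ) (hk : 1 ≤ k)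
    (i : Fin n) (hi : (belowSet x i).card = k - 1) :
    kthSmallest ((List.ofFn x : List ℝ) : Multiset ℝ) k = x i := by
  unfold kthSmallest
  set L := Multiset.sort ((List.ofFn x : List ℝ) : Multiset ℝ) (· ≤ ·) with hL
  have hperm : L.Perm (List.ofFn x) := by
    rw [← Multiset.coe_eq_coe]; exact Multiset.sort_eq _ _
  have hnd : L.Nodup := hperm.nodup_iff.2 (List.nodup_ofFn.2 hx)
  have hs : L.Pairwise (· ≤ ·) := Multiset.pairwise_sort _ _
  have hss : ∀ (a b : ℕ) (ha : a < L.length) (hb : b < L.length), a < b → L[a] < L[b] := by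
    intro a b ha hb hab
    refine lt_of_le_of_ne (List.pairwise_iff_getElem.1 hs a b ha hb hab) ?_
    intro h
    exact hab.ne ((hnd.getElem_inj_iff).1 h)
  have hmem : x i ∈ L := hperm.mem_iff.2 (by simp [List.mem_ofFn])
  obtain ⟨m, hm, hmx⟩ := List.getElem_of_mem hmem
  have hcount : L.countP (fun a => decide (a < x i)) = m := by
    rw [← List.take_append_drop m L, List.countP_append]
    have h1 : (L.take m).countP (fun a => decide (a < x i)) = m := by
      rw [List.countP_eq_length.2]
      · simp [hm.le]
      · intro a ha
        obtain ⟨p, hp, rfl⟩ := List.getElem_of_mem ha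
        have hp' : p < m := by simp at hp; omega
        simp only [List.getElem_take, decide_eq_true_eq]
        rw [← hmx]
        exact hss _ _ _ _ hp'
    have h2 : (L.drop m).countP (fun a => decide (a < x i)) = 0 := by
      rw [List.countP_eq_zero]
      intro a ha
      obtain ⟨p, hp, rfl⟩ := List.getElem_of_mem ha
      simp only [List.getElem_drop, decide_eq_true_eq, not_lt]
      rw [← hmx]
      rcases Nat.eq_zero_or_pos p with rfl | h0
      · simp
      · exact (hss _ _ _ _ (by omega)).le
    rw [h1, h2]; rfl
  have hcount2 : L.countP (fun a => decide (a < x i)) = (belowSet x i).card := by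
    rw [hperm.countP_eq]
    rw [List.ofFn_eq_map, List.countP_map, List.countP_eq_length_filter]
    rw [belowSet, Finset.card_def, Finset.filter_val]
    rw [show (Finset.univ : Finset (Fin n)).val = ((List.finRange n : List (Fin n)) : Multiset _) from rfl]
    rw [Multiset.filter_coe, Multiset.coe_card]
    rfl
  have : k - 1 = m := by omega
  rw [this, List.getD_eq_getElem _ _ hm, hmx]

lemma Beta_nat (a b : ℕ) : Beta ((a : ℝ) + 1) ((b : ℝ) + 1)
    = (a.factorial * b.factorial : ℝ) / ((a + b + 1).factorial : ℝ) := by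
  have h := Complex.betaIntegral_eq_Gamma_mul_div ((a : ℂ) + 1) ((b : ℂ) + 1)
    (by simp; positivity) (by simp; positivity)
  rw [Complex.Gamma_nat_eq_factorial, Complex.Gamma_nat_eq_factorial,
    show (a : ℂ) + 1 + (b + 1) = ((a + b + 1 : ℕ) : ℂ) + 1 by push_cast; ring,
    Complex.Gamma_nat_eq_factorial] at h
  have h2 : ((Beta ((a : ℝ) + 1) ((b : ℝ) + 1) : ℝ) : ℂ)
      = Complex.betaIntegral ((a : ℂ) + 1) ((b : ℂ) + 1) := by
    unfold Beta Complex.betaIntegral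
    rw [← intervalIntegral.integral_ofReal]
    congr 1
    ext t
    simp
  rw [h] at h2
  apply Complex.ofReal_injective
  rw [h2]
  push_cast
  rfl

lemma exists_perm {ι : Type*} [Fintype ι] [DecidableEq ι] (i i' : ι) (U U' : Finset ι)
    (hi : i ∉ U) (hi' : i' ∉ U') (hc : U.card = U'.card) :
    ∃ σ : Equiv.Perm ι, σ i = i' ∧ ∀ l, σ l ∈ U' ↔ l ∈ U := by
  obtain ⟨e⟩ : Nonempty (↥U ≃ ↥U') := ⟨Finset.equivOfCardEq hc⟩
  let f : ι → Bool × Bool := fun l => (decide (l = i), decide (l ∈ U))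
  let f' : ι → Bool × Bool := fun l => (decide (l = i'), decide (l ∈ U'))
  have hcard : (insert i U).card = (insert i' U').card := by
    rw [Finset.card_insert_of_notMem hi, Finset.card_insert_of_notMem hi', hc]
  have hF : ∀ c, Nonempty ({a // f a = c} ≃ {b // f' b = c}) := by
    intro c
    refine ⟨Fintype.equivOfCardEq ?_⟩
    rw [Fintype.card_subtype, Fintype.card_subtype]
    rcases c with ⟨_ | _, _ | _⟩
    · have h1 : Finset.univ.filter (fun l => f l = (false, false)) = (insert i U)ᶜ := by
        ext l; simp [f]
      have h2 : Finset.univ.filter (fun l => f' l = (false, false)) = (insert i' U')ᶜ := by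
        ext l; simp [f']
      rw [h1, h2, Finset.card_compl, Finset.card_compl, hcard]
    · have h1 : Finset.univ.filter (fun l => f l = (false, true)) = U := by
        ext l; simp [f]; rintro h rfl; exact hi h
      have h2 : Finset.univ.filter (fun l => f' l = (false, true)) = U' := by
        ext l; simp [f']; rintro h rfl; exact hi' h
      rw [h1, h2, hc]
    · have h1 : Finset.univ.filter (fun l => f l = (true, false)) = {i} := by
        ext l; simp [f]; rintro rfl; exact hi
      have h2 : Finset.univ.filter (fun l => f' l = (true, false)) = {i'} := by
        ext l; simp [f']; rintro rfl; exact hi'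
      rw [h1, h2]; simp
    · have h1 : Finset.univ.filter (fun l => f l = (true, true)) = ∅ := by
        ext l; simp [f]; rintro rfl; exact hi
      have h2 : Finset.univ.filter (fun l => f' l = (true, true)) = ∅ := by
        ext l; simp [f']; rintro rfl; exact hi'
      rw [h1, h2]
  let σ : ι ≃ ι := Equiv.ofFiberEquiv (fun c => (hF c).some)
  have hσ : ∀ l, f' (σ l) = f l := fun l => Equiv.ofFiberEquiv_map _ l
  refine ⟨σ, ?_, ?_⟩
  · have := hσ i
    simp [f, f'] at this
    exact this.1
  · intro l
    have := hσ l
    simp [f, f'] at this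
    exact this.2

section prob
variable {Ω : Type*} [MeasurableSpace Ω] (P : Measure Ω) [IsProbabilityMeasure P]
    (μ : Measure ℝ) [IsProbabilityMeasure μ]
    {ι : Type*} [Fintype ι] [DecidableEq ι] (Z : ι → Ω → ℝ)

lemma ae_injective [NullSingletonClass μ] (hmeas : ∀ i, Measurable (Z i))
    (hlaw : ∀ i, P.map (Z i) = μ) (hindep : iIndepFun Z P) :
    ∀ᵐ ω ∂P, Function.Injective (fun i => Z i ω) := by
  have h : ∀ i j, i ≠ j → ∀ᵐ ω ∂P, Z i ω ≠ Z j ω := by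
    intro i j hij
    have h1 := (indepFun_iff_map_prod_eq_prod_map_map (hmeas i).aemeasurable
      (hmeas j).aemeasurable).1 (hindep.indepFun hij)
    rw [hlaw, hlaw] at h1
    have h2 : (μ.prod μ) (Set.diagonal ℝ) = 0 := by
      rw [Measure.measure_prod_null measurableSet_diagonal]
      filter_upwards with a
      have : Prod.mk a ⁻¹' Set.diagonal ℝ = {a} := by
        ext b; simp [eq_comm]
      simp [this]
    rw [← h1, Measure.map_apply ((hmeas i).prodMk (hmeas j)) measurableSet_diagonal] at h2
    rw [ae_iff]
    convert h2 using 2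
    ext ω; simp
  have h' : ∀ᵐ ω ∂P, ∀ i j, i ≠ j → Z i ω ≠ Z j ω := by
    rw [ae_all_iff]; intro i; rw [ae_all_iff]; intro j
    by_cases hij : i = j
    · simp [hij]
    · filter_upwards [h i j hij] with ω hω _ using hω
  filter_upwards [h'] with ω hω i j hij
  by_contra hne
  exact hω i j hne hij

lemma measurableSet_belowSet (i : ι) (U : Finset ι) :
    MeasurableSet {x : ι → ℝ | belowSet x i = U} := by
  have : {x : ι → ℝ | belowSet x i = U} = ⋂ l, {x | x l < x i ↔ l ∈ U} := by
    ext x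
    simp [belowSet, Finset.ext_iff]
  rw [this]
  refine MeasurableSet.iInter fun l => ?_
  have hm : MeasurableSet {x : ι → ℝ | x l < x i} :=
    measurableSet_lt (measurable_pi_apply l) (measurable_pi_apply i)
  by_cases hl : l ∈ U
  · simpa [hl] using hm
  · have h := hm.compl
    convert h using 1
    ext x; simp [hl]

lemma prob_eq (hmeas : ∀ i, Measurable (Z i))
    (hlaw : ∀ i, P.map (Z i) = μ) (hindep : iIndepFun Z P)
    (i i' : ι) (U U' : Finset ι)
    (hi : i ∉ U) (hi' : i' ∉ U') (hc : U.card = U'.card) :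
    P.real {ω | belowSet (fun l => Z l ω) i = U}
      = P.real {ω | belowSet (fun l => Z l ω) i' = U'} := by
  obtain ⟨σ, h1, h2⟩ := exists_perm i i' U U' hi hi' hc
  have e1 : P.map (fun ω l => Z l ω) = Measure.pi (fun _ => μ) := by
    rw [(iIndepFun_iff_map_fun_eq_pi_map (fun i => (hmeas i).aemeasurable)).1 hindep]
    simp [hlaw]
  have e2 : P.map (fun ω l => Z (σ l) ω) = Measure.pi (fun _ => μ) := by
    rw [(iIndepFun_iff_map_fun_eq_pi_map (fun i => (hmeas (σ i)).aemeasurable)).1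
      (hindep.precomp σ.injective)]
    simp [hlaw]
  have hm := measurableSet_belowSet i U
  have m1 : Measurable (fun ω l => Z l ω) := measurable_pi_lambda _ hmeas
  have m2 : Measurable (fun ω l => Z (σ l) ω) := measurable_pi_lambda _ (fun l => hmeas (σ l))
  have e3 := congrArg (fun ν => ν {x : ι → ℝ | belowSet x i = U}) (e1.trans e2.symm)
  simp only [Measure.map_apply m1 hm, Measure.map_apply m2 hm] at e3
  have e4 : (fun ω l => Z (σ l) ω) ⁻¹' {x : ι → ℝ | belowSet x i = U}
      = {ω | belowSet (fun l => Z l ω) i' = U'} := by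
    ext ω
    simp only [Set.mem_preimage, Set.mem_ofPred_eq, belowSet, Finset.ext_iff, Finset.mem_filter,
      Finset.mem_univ, true_and, h1]
    constructor
    · intro h l
      have := h (σ.symm l)
      rw [← h2] at this
      simpa using this
    · intro h l
      rw [h, h2]
  rw [e4] at e3
  unfold Measure.real
  rw [← e3]; rfl

lemma prob_val [NullSingletonClass μ] (hmeas : ∀ i, Measurable (Z i))
    (hlaw : ∀ i, P.map (Z i) = μ) (hindep : iIndepFun Z P)
    (i : ι) (U : Finset ι) (hi : i ∉ U) :
    P.real {ω | belowSet (fun l => Z l ω) i = U}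
      = 1 / ((Fintype.card ι : ℝ) * ((Fintype.card ι - 1).choose U.card : ℝ)) := by
  set p := P.real {ω | belowSet (fun l => Z l ω) i = U} with hp
  have hms : ∀ i U, MeasurableSet {ω | belowSet (fun l => Z l ω) i = U} := fun i U =>
    (measurable_pi_lambda _ hmeas : Measurable (fun ω l => Z l ω)) (measurableSet_belowSet i U)
  have hu : U.card < Fintype.card ι := Finset.card_lt_univ_of_notMem hi
  have hsum : ∑ j : ι, ∑ V ∈ (Finset.univ.erase j).powersetCard U.card,
      P.real {ω | belowSet (fun l => Z l ω) j = V} = 1 := by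
    have : ∀ j V, P.real {ω | belowSet (fun l => Z l ω) j = V}
        = ∫ ω, Set.indicator {ω | belowSet (fun l => Z l ω) j = V} (fun _ => (1:ℝ)) ω ∂P := by
      intro j V
      rw [integral_indicator_const _ (hms j V)]; simp
    simp_rw [this]
    have hint : ∀ j V, Integrable
        (Set.indicator {ω | belowSet (fun l => Z l ω) j = V} (fun _ => (1:ℝ))) P := fun j V =>
      (integrable_const _).indicator (hms j V)
    have hone : (1:ℝ) = ∫ _ : Ω, (1:ℝ) ∂P := by simp
    conv_rhs => rw [hone]
    simp_rw [← integral_finsetSum _ (fun V _ => hint _ V)]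
    rw [← integral_finsetSum _ (fun j _ => integrable_finsetSum _ (fun V _ => hint _ V))]
    apply integral_congr_ae
    filter_upwards [ae_injective P μ Z hmeas hlaw hindep] with ω hω
    obtain ⟨i0, hi0⟩ := exists_unique_rank _ hω U.card hu
    simp only [Set.indicator_apply, Set.mem_ofPred_eq]
    simp only [Finset.sum_ite_eq, Finset.mem_powersetCard, hi0]
    rw [Finset.sum_eq_single i0]
    · rw [if_pos]
      refine ⟨?_, rfl⟩
      intro l hl
      simp only [Finset.mem_erase, Finset.mem_univ, and_true]
      rintro rfl
      exact notMem_belowSet _ _ hl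
    · intro b _ hb
      simp [hb]
    · simp
  have hconst : ∀ j : ι, ∀ V ∈ (Finset.univ.erase j).powersetCard U.card,
      P.real {ω | belowSet (fun l => Z l ω) j = V} = p := by
    intro j V hV
    rw [Finset.mem_powersetCard] at hV
    exact prob_eq P μ Z hmeas hlaw hindep j i V U
      (fun h => by simpa using hV.1 h) hi hV.2
  rw [Finset.sum_congr rfl (fun j _ => Finset.sum_congr rfl (hconst j))] at hsum
  simp only [Finset.sum_const, Finset.card_powersetCard, Finset.mem_univ,
    Finset.card_erase_of_mem, Finset.card_univ, nsmul_eq_mul] at hsum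
  rw [← mul_assoc] at hsum
  exact eq_one_div_of_mul_eq_one_right hsum
end prob

lemma sum_count (n M k : ℕ) (i : Fin n) (F : ℕ → ℝ) :
    ∑ U : Finset (Fin n ⊕ Fin M),
      (if Sum.inl i ∉ U ∧ U.toLeft.card = k then F U.toRight.card else 0)
    = ((n - 1).choose k : ℝ) * ∑ j ∈ Finset.range (M + 1), (M.choose j : ℝ) * F j := by
  classical
  rw [← Equiv.sum_comp (Finset.sumEquiv (α := Fin n) (β := Fin M)).symm.toEquiv]
  rw [Fintype.sum_prod_type]
  have h1 : ∀ (S : Finset (Fin n)) (A : Finset (Fin M)),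
      (Finset.sumEquiv (α := Fin n) (β := Fin M)).symm.toEquiv (S, A) = S.disjSum A :=
    fun _ _ => rfl
  simp only [h1, Finset.inl_mem_disjSum, Finset.toLeft_disjSum, Finset.toRight_disjSum]
  have h2 : ∀ S : Finset (Fin n), (∑ A : Finset (Fin M),
      if i ∉ S ∧ S.card = k then F A.card else 0)
      = if i ∉ S ∧ S.card = k then ∑ j ∈ Finset.range (M + 1), (M.choose j : ℝ) * F j else 0 := by
    intro S
    split_ifs
    · have := Finset.sum_powerset_apply_card F (x := (Finset.univ : Finset (Fin M)))
      simpa using this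
    · simp
  simp only [h2]
  rw [← Finset.sum_filter, Finset.sum_const, nsmul_eq_mul]
  congr 2
  have h3 : (Finset.univ.filter fun S : Finset (Fin n) => i ∉ S ∧ S.card = k)
      = (Finset.univ.erase i).powersetCard k := by
    ext S
    simp [Finset.mem_powersetCard, Finset.subset_erase]
  rw [h3, Finset.card_powersetCard]
  simp

lemma main_sum {Ω : Type*} [MeasurableSpace Ω] (P : Measure Ω) [IsProbabilityMeasure P]
    (μ : Measure ℝ) [IsProbabilityMeasure μ] [NullSingletonClass μ]
    (n M k : ℕ) (hk1 : 1 ≤ k) (hkn : k ≤ n)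
    (Z : Fin n ⊕ Fin M → Ω → ℝ)
    (hmeas : ∀ i, Measurable (Z i))
    (hlaw : ∀ i, P.map (Z i) = μ)
    (hindep : iIndepFun Z P) (g : ℕ → ℝ) :
    ∫ ω, g (Finset.univ.filter (fun j : Fin M =>
            Z (Sum.inr j) ω ≤
              kthSmallest
                ((List.ofFn (fun i : Fin n => Z (Sum.inl i) ω)) : Multiset ℝ)
                k)).card ∂P
      = (n : ℝ) * (((n - 1).choose (k - 1) : ℝ) * ∑ j ∈ Finset.range (M + 1),
          (M.choose j : ℝ) *
            (g j * (1 / (((n + M : ℕ) : ℝ) * ((n + M - 1).choose (k - 1 + j) : ℝ))))) := by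
  have hms : ∀ i U, MeasurableSet {ω | belowSet (fun l => Z l ω) i = U} := fun i U =>
    (measurable_pi_lambda _ hmeas : Measurable (fun ω l => Z l ω)) (measurableSet_belowSet i U)
  have hpt : ∀ᵐ ω ∂P, g (Finset.univ.filter (fun j : Fin M =>
            Z (Sum.inr j) ω ≤
              kthSmallest
                ((List.ofFn (fun i : Fin n => Z (Sum.inl i) ω)) : Multiset ℝ)
                k)).card
      = ∑ i : Fin n, ∑ U : Finset (Fin n ⊕ Fin M),
          Set.indicator {ω | belowSet (fun l => Z l ω) (Sum.inl i) = U}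
            (fun _ => if Sum.inl i ∉ U ∧ U.toLeft.card = k - 1
              then g U.toRight.card else 0) ω := by
    filter_upwards [ae_injective P μ Z hmeas hlaw hindep] with ω hω
    have hx : Function.Injective (fun i : Fin n => Z (Sum.inl i) ω) :=
      fun a b hab => Sum.inl_injective (hω hab)
    obtain ⟨i0, hi0⟩ := exists_unique_rank _ hx (k - 1) (by simp; omega)
    have hL : ∀ i : Fin n, (belowSet (fun l => Z l ω) (Sum.inl i)).toLeft
        = belowSet (fun i : Fin n => Z (Sum.inl i) ω) i := by
      intro i; ext l; simp [belowSet]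
    simp only [Set.indicator_apply, Set.mem_ofPred_eq, Finset.sum_ite_eq, Finset.mem_univ,
      if_true, notMem_belowSet, not_false_eq_true, true_and, hL, hi0]
    simp only [Finset.sum_ite_eq', Finset.mem_univ, if_true]
    rw [kth_eq _ hx k hk1 i0 ((hi0 i0).2 rfl)]
    congr 2
    ext j
    simp only [Finset.mem_filter, Finset.mem_univ, true_and, Finset.mem_toRight, belowSet]
    have : Z (Sum.inr j) ω ≠ Z (Sum.inl i0) ω := fun h => by simpa using hω h
    exact ⟨fun h => lt_of_le_of_ne h this, le_of_lt⟩
  rw [integral_congr_ae hpt]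
  have hint : ∀ i U (c : ℝ), Integrable
      (Set.indicator {ω | belowSet (fun l => Z l ω) i = U} (fun _ => c)) P := fun j V c =>
    (integrable_const _).indicator (hms j V)
  rw [integral_finsetSum _ (fun j _ => integrable_finsetSum _ (fun V _ => hint _ V _))]
  simp_rw [integral_finsetSum _ (fun V _ => hint _ V _)]
  simp_rw [integral_indicator_const _ (hms _ _)]
  have hterm : ∀ (i : Fin n) (U : Finset (Fin n ⊕ Fin M)),
      P.real {ω | belowSet (fun l => Z l ω) (Sum.inl i) = U} •
        (if Sum.inl i ∉ U ∧ U.toLeft.card = k - 1 then g U.toRight.card else 0)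
      = if Sum.inl i ∉ U ∧ U.toLeft.card = k - 1 then
          (fun j => g j * (1 / (((n + M : ℕ) : ℝ) * ((n + M - 1).choose (k - 1 + j) : ℝ))))
            U.toRight.card else 0 := by
    intro i U
    split_ifs with h
    · rw [prob_val P μ Z hmeas hlaw hindep _ _ h.1, smul_eq_mul, mul_comm]
      have hc : U.card = k - 1 + U.toRight.card := by
        rw [← h.2, Finset.card_toLeft_add_card_toRight]
      simp [hc]
    · simp
  rw [Finset.sum_congr rfl (fun i _ => (Finset.sum_congr rfl (fun U _ => hterm i U)).trans
    (sum_count n M (k - 1) i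
      (fun j => g j * (1 / (((n + M : ℕ) : ℝ) * ((n + M - 1).choose (k - 1 + j) : ℝ))))))]
  rw [Finset.sum_const, nsmul_eq_mul, Finset.card_univ, Fintype.card_fin]

lemma coef_eq (n M k j : ℕ) (hk1 : 1 ≤ k) (hkn : k ≤ n) (hj : j ≤ M) :
    (n : ℝ) * ((n - 1).choose (k - 1) : ℝ) *
      (1 / (((n + M : ℕ) : ℝ) * ((n + M - 1).choose (k - 1 + j) : ℝ)))
    = Beta ((k : ℝ) + j) ((M : ℝ) - j + ((n + 1 : ℕ) : ℝ) - k)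
        / Beta (k : ℝ) (((n + 1 : ℕ) : ℝ) - k) := by
  obtain ⟨a, rfl⟩ : ∃ a, k = a + 1 := ⟨k - 1, by omega⟩
  obtain ⟨b, rfl⟩ : ∃ b, n = a + 1 + b := ⟨n - (a + 1), by omega⟩
  obtain ⟨c, rfl⟩ : ∃ c, M = j + c := ⟨M - j, by omega⟩
  have e1 : Beta (((a + 1 : ℕ) : ℝ) + j) (((j + c : ℕ) : ℝ) - j + ((a + 1 + b + 1 : ℕ) : ℝ)
      - ((a + 1 : ℕ) : ℝ)) = Beta (((a + j : ℕ) : ℝ) + 1) (((c + b : ℕ) : ℝ) + 1) := by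
    congr 1 <;> push_cast <;> ring
  have e2 : Beta ((a + 1 : ℕ) : ℝ) (((a + 1 + b + 1 : ℕ) : ℝ) - ((a + 1 : ℕ) : ℝ))
      = Beta ((a : ℝ) + 1) ((b : ℝ) + 1) := by
    congr 1 <;> push_cast <;> ring
  rw [e1, e2, Beta_nat, Beta_nat]
  rw [show a + 1 + b - 1 = a + b by omega, show a + 1 - 1 = a by omega,
    show a + 1 + b + (j + c) - 1 = (a + j) + (c + b) by omega,
    show a + 1 + b + (j + c) = a + j + (c + b) + 1 by omega,
    show a + 1 + b = a + b + 1 by omega]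
  rw [Nat.cast_add_choose, Nat.cast_add_choose, Nat.factorial_succ, Nat.factorial_succ (a + b)]
  have f : ∀ m : ℕ, (m.factorial : ℝ) ≠ 0 := fun m => by exact_mod_cast m.factorial_ne_zero
  have f1 := f a
  have f2 := f b
  have f3 := f (a + b)
  have f4 := f (a + j)
  have f5 := f (c + b)
  have f6 := f (a + j + (c + b))
  have f7 : ((a + j + (c + b) + 1 : ℕ) : ℝ) ≠ 0 := by positivity
  have f8 : ((a + b + 1 : ℕ) : ℝ) ≠ 0 := by positivity
  rw [Nat.cast_mul, Nat.cast_mul]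
  field_simp

/-- One-dimensional reduction of Lemma 1 of the paper: with `Z_1, …, Z_{N-1+M}` i.i.d.
from an atomless real law, `R` the `k`-th smallest of `Z_1, …, Z_{N-1}` and
`C = #{j ≤ M : Z_{N-1+j} ≤ R}`, the expectation of `min(C/k, 1)` is the stated sum. -/
theorem expected_clipped_count_one_dim
    {Ω : Type*} [MeasurableSpace Ω] (P : Measure Ω) [IsProbabilityMeasure P]
    (μ : Measure ℝ) [IsProbabilityMeasure μ] [NullSingletonClass μ]
    (N M k : ℕ) (hk1 : 1 ≤ k) (hkN : k ≤ N - 1) (hkM : k ≤ M)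
    (Z : Fin (N - 1 + M) → Ω → ℝ)
    (hmeas : ∀ i, Measurable (Z i))
    (hlaw : ∀ i, P.map (Z i) = μ)
    (hindep : iIndepFun Z P) :
    ∫ ω, min
        (((Finset.univ.filter (fun j : Fin M =>
            Z (Fin.natAdd (N - 1) j) ω ≤
              kthSmallest
                ((List.ofFn (fun i : Fin (N - 1) => Z (Fin.castAdd M i) ω)) : Multiset ℝ)
                k)).card : ℝ) / k) 1 ∂P
      = ∑ j ∈ Finset.Icc 1 M,
          min ((j : ℝ) / k) 1 * (M.choose j : ℝ) *
            Beta ((k : ℝ) + j) ((M : ℝ) - j + N - k) / Beta (k : ℝ) ((N : ℝ) - k) := by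
  obtain ⟨n, rfl⟩ : ∃ n, N = n + 1 := ⟨N - 1, by omega⟩
  have hn : n + 1 - 1 = n := by omega
  have h := main_sum P μ (n + 1 - 1) M k hk1 hkN (fun s => Z (finSumFinEquiv s))
    (fun s => hmeas _) (fun s => hlaw _) (hindep.precomp finSumFinEquiv.injective)
    (fun c => min ((c : ℝ) / k) 1)
  refine Eq.trans ?_ (h.trans ?_)
  · rfl
  rw [Finset.range_eq_Ico, Finset.sum_eq_sum_Ico_succ_bot (by omega)]
  have h0 : min (((0 : ℕ) : ℝ) / k) 1 = 0 := by simp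
  rw [h0, zero_mul, mul_zero, zero_add, Finset.mul_sum, Finset.mul_sum]
  apply Finset.sum_congr (by ext; simp)
  intro j hj
  have hj' : j ≤ M := (Finset.mem_Icc.1 hj).2
  rw [mul_div_assoc, ← coef_eq n M k j hk1 (by omega) hj', hn]
  ring
end

section
/- Let Z_1, …, Z_{N−1+M} be independent real-valued random variables, each with the same atomless Borel probability law, and fix integers k, k' with 1 ≤ k ≤ N − 1 and 1 ≤ k' ≤ M. Let R denote the k-th smallest element of the multiset {Z_1, …, Z_{N−1}}, let S denote the k'-th smallest element of the multiset {Z_N, …, Z_{N−1+M}}, and let C = #{j ∈ {1, …, M} : Z_{N−1+j} ≤ R}. Then P(S ≤ R) = P(C ≥ k') = ∑_{j=k'}^M C(M, j) · B(k + j, M − j + N − k) / B(k, N − k), where C(M, j) is the binomial coefficient and B is the Beta function. -/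
open MeasureTheory ProbabilityTheory Finset

theorem list_getD_le_iff (r : ℝ) (l : List ℝ) (hl : l.Pairwise (· ≤ ·)) (k : ℕ) (hk : k < l.length) :
    l.getD k 0 ≤ r ↔ k + 1 ≤ l.countP (fun a => decide (a ≤ r)) := by
  induction l generalizing k with
  | nil => simp at hk
  | cons a t ih =>
    rw [List.pairwise_cons] at hl
    by_cases h : a ≤ r
    · cases k with
      | zero => simp [h]
      | succ k =>
        have := ih hl.2 k (by simpa using hk)
        simp [List.countP_cons, h] at this ⊢
        omega
    · have h0 : t.countP (fun a => decide (a ≤ r)) = 0 := by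
        rw [List.countP_eq_zero]
        intro b hb
        have := hl.1 b hb
        simp only [decide_eq_true_eq]
        linarith
      cases k with
      | zero => simp [h, List.countP_cons, h0]
      | succ k =>
        have := ih hl.2 k (by simpa using hk)
        simp [List.countP_cons, h, h0] at this ⊢
        exact this

theorem kthSmallest_le_iff {m : ℕ} (w : Fin m → ℝ) (k : ℕ) (hk : 1 ≤ k) (hkm : k ≤ m) (r : ℝ) :
    kthSmallest ((List.ofFn w : List ℝ) : Multiset ℝ) k ≤ r ↔
      k ≤ (Finset.univ.filter (fun j : Fin m => w j ≤ r)).card := by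
  unfold kthSmallest
  rw [list_getD_le_iff r _ (Multiset.pairwise_sort _ _) (k - 1) (by simp; omega), Nat.sub_add_cancel hk]
  rw [← Multiset.coe_countP, Multiset.sort_eq]
  rw [← Fin.univ_val_map, Multiset.countP_map]
  rfl

theorem measurable_kth {m : ℕ} (k : ℕ) (hk : 1 ≤ k) (hkm : k ≤ m) :
    Measurable (fun w : Fin m → ℝ => kthSmallest ((List.ofFn w : List ℝ) : Multiset ℝ) k) := by
  refine measurable_of_Iic fun r => ?_
  have : (fun w : Fin m → ℝ => kthSmallest ((List.ofFn w : List ℝ) : Multiset ℝ) k) ⁻¹' Set.Iic r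
     = {w | k ≤ ∑ j : Fin m, if w j ≤ r then 1 else 0} := by
    ext w
    simp [kthSmallest_le_iff w k hk hkm r]
  rw [this]
  refine measurableSet_le measurable_const ?_
  refine Finset.measurable_sum _ fun i _ => ?_
  refine Measurable.ite ?_ measurable_const measurable_const
  exact measurableSet_le (measurable_pi_apply i) measurable_const

theorem binom_eq (μ : Measure ℝ) [IsProbabilityMeasure μ] (m j : ℕ) (r : ℝ) :
    (Measure.pi (fun _ : Fin m => μ)).real
      {w | (Finset.univ.filter (fun i : Fin m => w i ≤ r)).card = j}
      = m.choose j * (cdf μ r) ^ j * (1 - cdf μ r) ^ (m - j) := by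
  have hset : {w : Fin m → ℝ | (Finset.univ.filter (fun i : Fin m => w i ≤ r)).card = j}
     = ⋃ s ∈ (Finset.univ : Finset (Fin m)).powersetCard j,
        Set.univ.pi (fun i => if i ∈ s then Set.Iic r else Set.Ioi r) := by
    ext w
    simp only [Set.mem_setOf_eq, Set.mem_iUnion, Finset.mem_powersetCard, Set.mem_pi]
    constructor
    · intro h
      refine ⟨_, ⟨Finset.subset_univ _, h⟩, fun i _ => ?_⟩
      by_cases hi : w i ≤ r <;> simp [hi]
      exact lt_of_not_ge hi
    · rintro ⟨s, ⟨-, hs⟩, h⟩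
      rw [← hs]; congr 1; ext i
      have := h i trivial
      by_cases hi : i ∈ s <;> simp [hi] at this ⊢ <;> exact this
  rw [hset, measureReal_biUnion_finset]
  · have : ∀ s ∈ (Finset.univ : Finset (Fin m)).powersetCard j,
      (Measure.pi (fun _ : Fin m => μ)).real (Set.univ.pi (fun i => if i ∈ s then Set.Iic r else Set.Ioi r)) = (cdf μ r) ^ j * (1 - cdf μ r) ^ (m - j) := by
      intro s hs
      rw [Finset.mem_powersetCard] at hs
      have e : ∀ i : Fin m, μ.real (if i ∈ s then Set.Iic r else Set.Ioi r) = if i ∈ s then cdf μ r else 1 - cdf μ r := by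
        intro i
        split_ifs
        · rw [cdf_eq_real]
        · rw [cdf_eq_real, ← Set.compl_Iic, probReal_compl_eq_one_sub measurableSet_Iic]
      rw [Measure.real, Measure.pi_pi, ENNReal.toReal_prod]
      change ∏ i, μ.real _ = _
      simp_rw [e]
      rw [Finset.prod_ite, Finset.prod_const, Finset.prod_const]
      have h1 : (Finset.univ.filter (fun i => i ∈ s)) = s := by ext; simp
      have h2 : (Finset.univ.filter (fun i => i ∉ s)) = sᶜ := by ext; simp
      rw [h1, h2, Finset.card_compl, hs.2, Fintype.card_fin]
    rw [Finset.sum_congr rfl this]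
    simp [mul_assoc]
  · intro s hs t ht hst
    rw [Function.onFun, Set.disjoint_left]
    intro w hw hw'
    apply hst
    ext i
    have a := hw i trivial
    have b := hw' i trivial
    by_cases h1 : i ∈ s <;> by_cases h2 : i ∈ t <;> simp [h1, h2] at a b ⊢ <;> linarith
  · intro s _
    refine MeasurableSet.univ_pi fun i => ?_
    split_ifs
    · exact measurableSet_Iic
    · exact measurableSet_Ioi

theorem measurableSet_card (m j : ℕ) (r : ℝ) : MeasurableSet {w : Fin m → ℝ | (Finset.univ.filter (fun i : Fin m => w i ≤ r)).card = j} := by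
  have : {w : Fin m → ℝ | (Finset.univ.filter (fun i : Fin m => w i ≤ r)).card = j}
     = {w | (∑ j : Fin m, if w j ≤ r then 1 else 0) = j} := by
    ext w
    simp
  rw [this]
  refine measurableSet_eq_fun ?_ measurable_const
  refine Finset.measurable_sum _ fun i _ => ?_
  refine Measurable.ite ?_ measurable_const measurable_const
  exact measurableSet_le (measurable_pi_apply i) measurable_const

theorem binom_ge (μ : Measure ℝ) [IsProbabilityMeasure μ] (m k : ℕ) (r : ℝ) :
    (Measure.pi (fun _ : Fin m => μ)).real
      {w | k ≤ (Finset.univ.filter (fun i : Fin m => w i ≤ r)).card}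
      = ∑ j ∈ Finset.Icc k m, m.choose j * (cdf μ r) ^ j * (1 - cdf μ r) ^ (m - j) := by
  have : {w : Fin m → ℝ | k ≤ (Finset.univ.filter (fun i : Fin m => w i ≤ r)).card}
    = ⋃ j ∈ Finset.Icc k m, {w | (Finset.univ.filter (fun i : Fin m => w i ≤ r)).card = j} := by
    ext w
    have := Finset.card_filter_le (Finset.univ : Finset (Fin m)) (fun i => w i ≤ r)
    simp at this ⊢
    intro _; exact this
  rw [this, measureReal_biUnion_finset]
  · simp_rw [binom_eq]
  · intro a _ b _ hab
    rw [Function.onFun, Set.disjoint_left]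
    rintro w rfl h
    exact hab h
  · intro j _
    exact measurableSet_card m j r

/-- Binomial upper tail derivative. -/
theorem hasDerivAt_tail (n k : ℕ) (hk : 1 ≤ k) (hkn : k ≤ n) (t : ℝ) :
    HasDerivAt (fun t : ℝ => ∑ j ∈ Finset.Icc k n, (n.choose j : ℝ) * t ^ j * (1 - t) ^ (n - j))
      (k * n.choose k * t ^ (k - 1) * (1 - t) ^ (n - k)) t := by
  induction hkn using Nat.decreasingInduction with
  | self =>
    simp
    simpa using hasDerivAt_pow n t
  | of_succ k hkn ih =>
    have ih := ih (by omega)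
    have hI : Finset.Icc k n = insert k (Finset.Icc (k + 1) n) := by
      ext; simp; omega
    have e : (fun t : ℝ => ∑ j ∈ Finset.Icc k n, (n.choose j : ℝ) * t ^ j * (1 - t) ^ (n - j)) =
       fun t => (n.choose k : ℝ) * t ^ k * (1 - t) ^ (n - k) + ∑ j ∈ Finset.Icc (k+1) n, (n.choose j : ℝ) * t ^ j * (1 - t) ^ (n - j) := by
      funext t
      rw [hI, Finset.sum_insert (by simp)]
    rw [e]
    have h1 : HasDerivAt (fun t : ℝ => (n.choose k : ℝ) * t ^ k * (1 - t) ^ (n - k)) _ t :=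
      (((hasDerivAt_pow k t).const_mul (n.choose k : ℝ))).mul (((hasDerivAt_id t).const_sub 1).pow (n - k))
    refine (h1.add ih).congr_deriv ?_
    obtain ⟨d, rfl⟩ : ∃ d, n = k + 1 + d := ⟨n - (k+1), by omega⟩
    have c : ((k + 1 : ℕ) : ℝ) * (k+1+d).choose (k+1) = (d + 1) * (k+1+d).choose k := by
      have := Nat.choose_succ_right_eq (k+1+d) k
      have h2 : k + 1 + d - k = d + 1 := by omega
      rw [h2] at this
      have : ((k+1+d).choose (k+1) : ℝ) * (k+1) = (k+1+d).choose k * (d+1) := by exact_mod_cast this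
      push_cast; linarith
    have h2 : k + 1 + d - k = d + 1 := by omega
    simp only [h2, Nat.add_sub_cancel_left, Nat.add_sub_cancel, id]
    rw [c]
    push_cast
    ring

theorem continuous_cdf_of_noAtoms (μ : Measure ℝ) [IsProbabilityMeasure μ] [NullSingletonClass μ] :
    Continuous (cdf μ) := by
  rw [continuous_iff_continuousAt]
  intro x
  rw [(monotone_cdf μ).continuousAt_iff_leftLim_eq_rightLim, (cdf μ).rightLim_eq]
  refine le_antisymm ((monotone_cdf μ).leftLim_le le_rfl) ?_
  have h := (cdf μ).measure_singleton x
  rw [measure_cdf, measure_singleton] at h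
  have := ENNReal.ofReal_eq_zero.1 h.symm
  linarith

theorem exists_level (μ : Measure ℝ) [IsProbabilityMeasure μ] [NullSingletonClass μ] (t : ℝ)
    (h0 : 0 < t) (h1 : t < 1) : ∃ x, cdf μ x = t ∧ ∀ y, cdf μ y ≤ t ↔ y ≤ x := by
  have hc := continuous_cdf_of_noAtoms μ
  obtain ⟨a, ha⟩ := ((tendsto_cdf_atBot μ).eventually (gt_mem_nhds h0)).exists
  obtain ⟨b, hb⟩ := ((tendsto_cdf_atTop μ).eventually (lt_mem_nhds h1)).exists
  obtain ⟨x0, hx0⟩ := mem_range_of_exists_le_of_exists_ge hc ⟨a, ha.le⟩ ⟨b, hb.le⟩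
  have hbdd : BddAbove {y | cdf μ y ≤ t} := by
    refine ⟨b, fun y hy => ?_⟩
    by_contra hlt
    have := monotone_cdf μ (not_le.1 hlt).le
    have hy : cdf μ y ≤ t := hy
    linarith
  have hne : {y | cdf μ y ≤ t}.Nonempty := ⟨a, ha.le⟩
  have hcl : IsClosed {y | cdf μ y ≤ t} := isClosed_le hc continuous_const
  have hm : cdf μ (sSup {y | cdf μ y ≤ t}) ≤ t := hcl.csSup_mem hne hbdd
  have hx0' : x0 ≤ sSup {y | cdf μ y ≤ t} := le_csSup hbdd hx0.le
  refine ⟨sSup {y | cdf μ y ≤ t}, le_antisymm hm ?_, fun y => ⟨fun h => le_csSup hbdd h, fun h => (monotone_cdf μ h).trans hm⟩⟩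
  exact hx0.ge.trans (monotone_cdf μ hx0')

theorem tail_zero (n k : ℕ) (hk : 1 ≤ k) :
    ∑ j ∈ Finset.Icc k n, (n.choose j : ℝ) * (0:ℝ) ^ j * (1 - 0) ^ (n - j) = 0 := by
  refine Finset.sum_eq_zero fun j hj => ?_
  rw [Finset.mem_Icc] at hj
  rw [zero_pow (by omega)]; simp

theorem tail_one (n k : ℕ) (hkn : k ≤ n) :
    ∑ j ∈ Finset.Icc k n, (n.choose j : ℝ) * (1:ℝ) ^ j * (1 - 1) ^ (n - j) = 1 := by
  rw [Finset.sum_eq_single n]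
  · simp
  · intro j hj hne
    rw [Finset.mem_Icc] at hj
    rw [sub_self, zero_pow (by omega)]; simp
  · simp [hkn]

theorem integral_dens (n k : ℕ) (hk : 1 ≤ k) (hkn : k ≤ n) (t : ℝ) :
    ∫ s in (0:ℝ)..t, (k * n.choose k * s ^ (k - 1) * (1 - s) ^ (n - k) : ℝ) =
     ∑ j ∈ Finset.Icc k n, (n.choose j : ℝ) * t ^ j * (1 - t) ^ (n - j) := by
  rw [intervalIntegral.integral_eq_sub_of_hasDerivAt (fun x _ => hasDerivAt_tail n k hk hkn x)
    (Continuous.intervalIntegrable (by fun_prop) _ _), tail_zero n k hk, sub_zero]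

theorem lintegral_dens (n k : ℕ) (hk : 1 ≤ k) (hkn : k ≤ n) (t : ℝ) (h0 : 0 ≤ t) (h1 : t ≤ 1) :
    ∫⁻ s in Set.Ioc 0 t, ENNReal.ofReal (k * n.choose k * s ^ (k - 1) * (1 - s) ^ (n - k)) =
     ENNReal.ofReal (∑ j ∈ Finset.Icc k n, (n.choose j : ℝ) * t ^ j * (1 - t) ^ (n - j)) := by
  rw [← integral_dens n k hk hkn t, intervalIntegral.integral_of_le h0, ofReal_integral_eq_lintegral_ofReal]
  · exact (Continuous.intervalIntegrable (by fun_prop) 0 t).1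
  · filter_upwards [ae_restrict_mem measurableSet_Ioc] with s hs
    have : 0 ≤ 1 - s := by linarith [hs.2]
    have := hs.1
    simp only [Pi.zero_apply]
    positivity

theorem law_cdf_kth (μ : Measure ℝ) [IsProbabilityMeasure μ] [NullSingletonClass μ]
    (n k : ℕ) (hk : 1 ≤ k) (hkn : k ≤ n) :
    (Measure.pi (fun _ : Fin n => μ)).map
      (fun w => cdf μ (kthSmallest ((List.ofFn w : List ℝ) : Multiset ℝ) k)) =
    (volume.restrict (Set.Ioc (0:ℝ) 1)).withDensity
      (fun s => ENNReal.ofReal (k * n.choose k * s ^ (k - 1) * (1 - s) ^ (n - k))) := by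
  have hmeas : Measurable (fun w : Fin n → ℝ => cdf μ (kthSmallest ((List.ofFn w : List ℝ) : Multiset ℝ) k)) :=
    (continuous_cdf_of_noAtoms μ).measurable.comp (measurable_kth k hk hkn)
  have hprob : IsProbabilityMeasure ((Measure.pi (fun _ : Fin n => μ)).map
      (fun w => cdf μ (kthSmallest ((List.ofFn w : List ℝ) : Multiset ℝ) k))) :=
    Measure.isProbabilityMeasure_map hmeas.aemeasurable
  have hmid : ∀ t, 0 < t → t < 1 → (Measure.pi (fun _ : Fin n => μ)).map
      (fun w => cdf μ (kthSmallest ((List.ofFn w : List ℝ) : Multiset ℝ) k)) (Set.Iic t)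
      = ENNReal.ofReal (∑ j ∈ Finset.Icc k n, (n.choose j : ℝ) * t ^ j * (1 - t) ^ (n - j)) := by
    intro t h0 h1
    obtain ⟨x, hx, hxy⟩ := exists_level μ t h0 h1
    rw [Measure.map_apply hmeas measurableSet_Iic]
    have : (fun w : Fin n → ℝ => cdf μ (kthSmallest ((List.ofFn w : List ℝ) : Multiset ℝ) k)) ⁻¹' Set.Iic t
      = {w | k ≤ (Finset.univ.filter (fun i : Fin n => w i ≤ x)).card} := by
      ext w
      simp [hxy, kthSmallest_le_iff w k hk hkn x]
    rw [this, ← hx, ← binom_ge, ofReal_measureReal]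
  refine Measure.ext_of_Iic _ _ fun t => ?_
  rw [withDensity_apply _ measurableSet_Iic, Measure.restrict_restrict measurableSet_Iic]
  rcases le_or_gt t 0 with h0 | h0
  · have : Set.Iic t ∩ Set.Ioc 0 1 = ∅ := by
      ext y; simp; intros; linarith
    rw [this, Measure.restrict_empty, lintegral_zero_measure]
    have hlim : Filter.Tendsto (fun t : ℝ => ENNReal.ofReal (∑ j ∈ Finset.Icc k n, (n.choose j : ℝ) * t ^ j * (1 - t) ^ (n - j))) (nhdsWithin 0 (Set.Ioi 0)) (nhds 0) := by
      have hc : Continuous (fun t : ℝ => ENNReal.ofReal (∑ j ∈ Finset.Icc k n, (n.choose j : ℝ) * t ^ j * (1 - t) ^ (n - j))) :=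
        ENNReal.continuous_ofReal.comp (by fun_prop)
      have := hc.tendsto 0
      rw [tail_zero n k hk, ENNReal.ofReal_zero] at this
      exact this.mono_left nhdsWithin_le_nhds
    refine le_antisymm (ge_of_tendsto hlim ?_) zero_le
    filter_upwards [Ioo_mem_nhdsGT (zero_lt_one' ℝ)] with s hs
    rw [← hmid s hs.1 hs.2]
    exact measure_mono (Set.Iic_subset_Iic.2 (h0.trans hs.1.le))
  rcases lt_or_ge t 1 with h1 | h1
  · have : Set.Iic t ∩ Set.Ioc 0 1 = Set.Ioc 0 t := by
      ext y; simp; constructor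
      · rintro ⟨a, b, c⟩; exact ⟨b, a⟩
      · rintro ⟨a, b⟩; exact ⟨b, a, by linarith⟩
    rw [this, lintegral_dens n k hk hkn t h0.le h1.le, hmid t h0 h1]
  · have : Set.Iic t ∩ Set.Ioc 0 1 = Set.Ioc 0 1 := by
      rw [Set.inter_eq_right]
      intro y hy
      exact hy.2.trans h1
    rw [this, lintegral_dens n k hk hkn 1 zero_le_one le_rfl, tail_one n k hkn,
      Measure.map_apply hmeas measurableSet_Iic]
    have : (fun w : Fin n → ℝ => cdf μ (kthSmallest ((List.ofFn w : List ℝ) : Multiset ℝ) k)) ⁻¹' Set.Iic t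
      = Set.univ := by
      ext w
      simpa using (cdf_le_one μ _).trans h1
    rw [this]; simp

theorem Beta_nat_s2 (a b : ℕ) : Beta (a + 1) (b + 1) = ∫ t in (0:ℝ)..1, t ^ a * (1 - t) ^ b := by
  unfold Beta
  simp [Real.rpow_natCast]

theorem expect_formula (μ : Measure ℝ) [IsProbabilityMeasure μ] [NullSingletonClass μ]
    (n M k k' : ℕ) (hk : 1 ≤ k) (hkn : k ≤ n) :
    ∫ w, ∑ j ∈ Finset.Icc k' M, M.choose j *
      (cdf μ (kthSmallest ((List.ofFn w : List ℝ) : Multiset ℝ) k)) ^ j *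
      (1 - cdf μ (kthSmallest ((List.ofFn w : List ℝ) : Multiset ℝ) k)) ^ (M - j)
      ∂(Measure.pi (fun _ : Fin n => μ)) =
    ∑ j ∈ Finset.Icc k' M,
            (M.choose j : ℝ) *
              Beta ((k : ℝ) + j) ((M : ℝ) - j + (n + 1 : ℝ) - k) / Beta (k : ℝ) ((n + 1 : ℝ) - k) := by
  have hmeas : Measurable (fun w : Fin n → ℝ => cdf μ (kthSmallest ((List.ofFn w : List ℝ) : Multiset ℝ) k)) :=
    (continuous_cdf_of_noAtoms μ).measurable.comp (measurable_kth k hk hkn)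
  have h1 := integral_map (μ := Measure.pi (fun _ : Fin n => μ)) hmeas.aemeasurable
    (f := fun t : ℝ => ∑ j ∈ Finset.Icc k' M, (M.choose j : ℝ) * t ^ j * (1 - t) ^ (M - j))
    (Continuous.aestronglyMeasurable (by fun_prop))
  rw [← h1, law_cdf_kth μ n k hk hkn, integral_withDensity_eq_integral_toReal_smul (by fun_prop) (by simp)]
  have h2 : ∫ t in Set.Ioc (0:ℝ) 1, (ENNReal.ofReal (k * n.choose k * t ^ (k - 1) * (1 - t) ^ (n - k))).toReal •
      ∑ j ∈ Finset.Icc k' M, (M.choose j : ℝ) * t ^ j * (1 - t) ^ (M - j) =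
      ∫ t in (0:ℝ)..1, ∑ j ∈ Finset.Icc k' M, ((k * n.choose k : ℝ) * M.choose j) *
         (t ^ (k - 1 + j) * (1 - t) ^ (M - j + (n - k))) := by
    rw [intervalIntegral.integral_of_le zero_le_one]
    refine setIntegral_congr_fun measurableSet_Ioc fun t ht => ?_
    have h3 : 0 ≤ 1 - t := by linarith [ht.2]
    have h4 := ht.1
    simp only [smul_eq_mul]
    rw [ENNReal.toReal_ofReal (by positivity), Finset.mul_sum]
    refine Finset.sum_congr rfl fun j _ => ?_
    ring
  rw [h2, intervalIntegral.integral_finsetSum (fun j _ => Continuous.intervalIntegrable (by fun_prop) _ _)]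
  have hB : Beta (k : ℝ) ((n + 1 : ℝ) - k) = ∫ t in (0:ℝ)..1, t ^ (k - 1) * (1 - t) ^ (n - k) := by
    rw [← Beta_nat_s2]
    push_cast [Nat.cast_sub hk, Nat.cast_sub hkn]
    congr 1 <;> ring
  have hc : (k * n.choose k : ℝ) * Beta (k : ℝ) ((n + 1 : ℝ) - k) = 1 := by
    have := integral_dens n k hk hkn 1
    rw [tail_one n k hkn] at this
    rw [hB, ← intervalIntegral.integral_const_mul]
    refine Eq.trans ?_ this
    congr 1; funext t; ring
  have hne : Beta (k : ℝ) ((n + 1 : ℝ) - k) ≠ 0 := right_ne_zero_of_mul_eq_one hc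
  refine Finset.sum_congr rfl fun j hj => ?_
  rw [Finset.mem_Icc] at hj
  rw [intervalIntegral.integral_const_mul, ← Beta_nat_s2, eq_div_iff hne]
  push_cast [Nat.cast_sub hk, Nat.cast_sub hkn, Nat.cast_sub hj.2]
  have e1 : (k:ℝ) - 1 + j + 1 = k + j := by ring
  have e2 : (M:ℝ) - j + (n - k) + 1 = M - j + (n + 1) - k := by ring
  rw [e1, e2]
  linear_combination (M.choose j : ℝ) * Beta ((k : ℝ) + j) ((M : ℝ) - j + (n + 1 : ℝ) - k) * hc

theorem joint_law {Ω : Type*} [MeasurableSpace Ω] (P : Measure Ω) [IsProbabilityMeasure P]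
    (μ : Measure ℝ) [IsProbabilityMeasure μ]
    (n M : ℕ) (Z : Fin (n + M) → Ω → ℝ)
    (hmeas : ∀ i, Measurable (Z i))
    (hlaw : ∀ i, P.map (Z i) = μ)
    (hindep : iIndepFun Z P) :
    P.map (fun ω => ((fun i : Fin n => Z (Fin.castAdd M i) ω), (fun j : Fin M => Z (Fin.natAdd n j) ω)))
     = (Measure.pi (fun _ : Fin n => μ)).prod (Measure.pi (fun _ : Fin M => μ)) := by
  have hX : P.map (fun ω (i : Fin n) => Z (Fin.castAdd M i) ω) = Measure.pi (fun _ : Fin n => μ) := by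
    rw [(iIndepFun_iff_map_fun_eq_pi_map (fun i => (hmeas _).aemeasurable)).1
      (hindep.precomp (Fin.castAdd_injective n M))]
    simp [hlaw]
  have hY : P.map (fun ω (i : Fin M) => Z (Fin.natAdd n i) ω) = Measure.pi (fun _ : Fin M => μ) := by
    rw [(iIndepFun_iff_map_fun_eq_pi_map (fun i => (hmeas _).aemeasurable)).1
      (hindep.precomp (Fin.natAdd_injective M n))]
    simp [hlaw]
  have hI : IndepFun (fun ω (i : Fin n) => Z (Fin.castAdd M i) ω) (fun ω (i : Fin M) => Z (Fin.natAdd n i) ω) P := by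
    have := hindep.indepFun_finset (Finset.univ.image (Fin.castAdd M)) (Finset.univ.image (Fin.natAdd n)) (by
      rw [Finset.disjoint_left]
      intro a ha hb
      simp only [Finset.mem_image, Finset.mem_univ, true_and] at ha hb
      obtain ⟨i, rfl⟩ := ha
      obtain ⟨j, hj⟩ := hb
      have := congrArg Fin.val hj
      simp at this
      omega) hmeas
    exact this.comp
      (φ := fun (f : (Finset.univ.image (Fin.castAdd M) : Finset (Fin (n + M))) → ℝ) (i : Fin n) =>
        f ⟨Fin.castAdd M i, Finset.mem_image_of_mem _ (Finset.mem_univ i)⟩)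
      (ψ := fun (f : (Finset.univ.image (Fin.natAdd n) : Finset (Fin (n + M))) → ℝ) (i : Fin M) =>
        f ⟨Fin.natAdd n i, Finset.mem_image_of_mem _ (Finset.mem_univ i)⟩)
      (measurable_pi_lambda _ fun i => measurable_pi_apply _)
      (measurable_pi_lambda _ fun i => measurable_pi_apply _)
  rw [hI.map_prod_eq_prod_map_map (by fun_prop) (by fun_prop), hX, hY]

theorem core {Ω : Type*} [MeasurableSpace Ω] (P : Measure Ω) [IsProbabilityMeasure P]
    (μ : Measure ℝ) [IsProbabilityMeasure μ] [NullSingletonClass μ]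
    (n M k k' : ℕ) (hk1 : 1 ≤ k) (hkn : k ≤ n)
    (Z : Fin (n + M) → Ω → ℝ)
    (hmeas : ∀ i, Measurable (Z i))
    (hlaw : ∀ i, P.map (Z i) = μ)
    (hindep : iIndepFun Z P) :
    (P {ω | k' ≤ (Finset.univ.filter (fun j : Fin M =>
            Z (Fin.natAdd n j) ω ≤
              kthSmallest
                ((List.ofFn (fun i : Fin n => Z (Fin.castAdd M i) ω)) : Multiset ℝ)
                k)).card}).toReal
        = ∑ j ∈ Finset.Icc k' M,
            (M.choose j : ℝ) *
              Beta ((k : ℝ) + j) ((M : ℝ) - j + (n + 1 : ℝ) - k) / Beta (k : ℝ) ((n + 1 : ℝ) - k) := by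
  let A : Set ((Fin n → ℝ) × (Fin M → ℝ)) := {p | k' ≤ (Finset.univ.filter (fun j : Fin M =>
            p.2 j ≤ kthSmallest ((List.ofFn p.1 : List ℝ) : Multiset ℝ) k)).card}
  have hA : MeasurableSet A := by
    have : A = {p | k' ≤ ∑ j : Fin M, if p.2 j ≤ kthSmallest ((List.ofFn p.1 : List ℝ) : Multiset ℝ) k then 1 else 0} := by
      ext p; simp [A]
    rw [this]
    refine measurableSet_le measurable_const ?_
    refine Finset.measurable_sum _ fun i _ => ?_
    refine Measurable.ite ?_ measurable_const measurable_const
    exact measurableSet_le (by fun_prop) ((measurable_kth k hk1 hkn).comp measurable_fst)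
  have h1 : P {ω | k' ≤ (Finset.univ.filter (fun j : Fin M =>
            Z (Fin.natAdd n j) ω ≤
              kthSmallest
                ((List.ofFn (fun i : Fin n => Z (Fin.castAdd M i) ω)) : Multiset ℝ)
                k)).card} = P.map (fun ω => ((fun i : Fin n => Z (Fin.castAdd M i) ω), (fun j : Fin M => Z (Fin.natAdd n j) ω))) A := by
    rw [Measure.map_apply (by fun_prop) hA]
    rfl
  rw [h1, joint_law P μ n M Z hmeas hlaw hindep, ← expect_formula μ n M k k' hk1 hkn,
    Measure.prod_apply hA, ← integral_toReal]
  · refine integral_congr_ae (Filter.Eventually.of_forall fun w => ?_)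
    exact binom_ge μ M k' (kthSmallest ((List.ofFn w : List ℝ) : Multiset ℝ) k)
  · exact (measurable_measure_prodMk_left hA).aemeasurable
  · exact Filter.Eventually.of_forall fun w => measure_lt_top _ _

/-- With `Z_1, …, Z_{N-1+M}` i.i.d. from an atomless real law, `R` the `k`-th smallest of
`Z_1, …, Z_{N-1}`, `S` the `k'`-th smallest of `Z_N, …, Z_{N-1+M}`, and
`C = #{j ≤ M : Z_{N-1+j} ≤ R}`, one has
`P(S ≤ R) = P(C ≥ k') = ∑_{j=k'}^M C(M,j) B(k+j, M-j+N-k) / B(k, N-k)`: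
the upper tail of a Beta-Binomial(M, k, N-k) distribution. -/
theorem prob_kth_synthetic_neighbor_within_ball
    {Ω : Type*} [MeasurableSpace Ω] (P : Measure Ω) [IsProbabilityMeasure P]
    (μ : Measure ℝ) [IsProbabilityMeasure μ] [NullSingletonClass μ]
    (N M k k' : ℕ) (hk1 : 1 ≤ k) (hkN : k ≤ N - 1) (hk'1 : 1 ≤ k') (hk'M : k' ≤ M)
    (Z : Fin (N - 1 + M) → Ω → ℝ)
    (hmeas : ∀ i, Measurable (Z i))
    (hlaw : ∀ i, P.map (Z i) = μ)
    (hindep : iIndepFun Z P) :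
    P {ω | kthSmallest
            ((List.ofFn (fun j : Fin M => Z (Fin.natAdd (N - 1) j) ω)) : Multiset ℝ) k'
          ≤ kthSmallest
            ((List.ofFn (fun i : Fin (N - 1) => Z (Fin.castAdd M i) ω)) : Multiset ℝ) k}
      = P {ω | k' ≤ (Finset.univ.filter (fun j : Fin M =>
            Z (Fin.natAdd (N - 1) j) ω ≤
              kthSmallest
                ((List.ofFn (fun i : Fin (N - 1) => Z (Fin.castAdd M i) ω)) : Multiset ℝ)
                k)).card}
    ∧ (P {ω | k' ≤ (Finset.univ.filter (fun j : Fin M =>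
            Z (Fin.natAdd (N - 1) j) ω ≤
              kthSmallest
                ((List.ofFn (fun i : Fin (N - 1) => Z (Fin.castAdd M i) ω)) : Multiset ℝ)
                k)).card}).toReal
        = ∑ j ∈ Finset.Icc k' M,
            (M.choose j : ℝ) *
              Beta ((k : ℝ) + j) ((M : ℝ) - j + N - k) / Beta (k : ℝ) ((N : ℝ) - k) := by
  constructor
  · congr 1
    ext ω
    exact kthSmallest_le_iff _ k' hk'1 hk'M _
  · have hN : (N : ℝ) = ((N - 1 : ℕ) : ℝ) + 1 := by
      rw [Nat.cast_sub (by omega)]; simp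
    rw [hN]
    exact core P μ (N - 1) M k k' hk1 hkN Z hmeas hlaw hindep
end

section
/- Fix integers N ≥ 2 and k with 1 ≤ k ≤ N − 1, and for each integer m ≥ 1 define E_m = ∑_{j=1}^m min(j/k, 1) · C(m, j) · B(k + j, m − j + N − k) / B(k, N − k), where C(m, j) is the binomial coefficient and B is the Beta function. Then the sequence (E_m)_{m ≥ 1} is monotone nondecreasing in m. -/
open MeasureTheory Finset

/-- The expected value of the unnormalized Clipped Coverage (Lemma 1) when the synthetic
set has `m` samples. -/
noncomputable def expectedClippedCoverage (N k m : ℕ) : ℝ :=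
  ∑ j ∈ Finset.Icc 1 m,
    min ((j : ℝ) / k) 1 * (m.choose j : ℝ) *
      Beta ((k : ℝ) + j) ((m : ℝ) - j + N - k) / Beta (k : ℝ) ((N : ℝ) - k)

/-- The Beta integral with natural number exponents. -/
noncomputable def natBeta (a b : ℕ) : ℝ := ∫ t in (0:ℝ)..1, t ^ a * (1 - t) ^ b

lemma natBeta_nonneg (a b : ℕ) : 0 ≤ natBeta a b := by
  unfold natBeta
  apply intervalIntegral.integral_nonneg (by norm_num)
  intro t ht
  exact mul_nonneg (pow_nonneg ht.1 _) (pow_nonneg (by linarith [ht.2]) _)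

lemma natBeta_split (a b : ℕ) : natBeta a b = natBeta (a + 1) b + natBeta a (b + 1) := by
  unfold natBeta
  rw [← intervalIntegral.integral_add]
  · congr 1
    ext t
    ring
  · exact Continuous.intervalIntegrable (by fun_prop) _ _
  · exact Continuous.intervalIntegrable (by fun_prop) _ _

lemma Beta_eq_natBeta (x y : ℝ) (a b : ℕ) (hx : x = a + 1) (hy : y = b + 1) :
    Beta x y = natBeta a b := by
  subst hx hy
  simp [Beta, natBeta, Real.rpow_natCast]

/-- The unnormalized sum. -/
noncomputable def clipSum (w : ℕ → ℝ) (a c m : ℕ) : ℝ :=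
  ∑ j ∈ Finset.range (m + 1), w j * (m.choose j : ℝ) * natBeta (a + j) (m - j + c)

lemma clipSum_succ (w : ℕ → ℝ) (hw0 : w 0 = 0) (hw : ∀ j, w j ≤ w (j + 1)) (a c m : ℕ) :
    clipSum w a c m ≤ clipSum w a c (m + 1) := by
  have h1 : clipSum w a c (m + 1) =
      ∑ j ∈ Finset.range (m + 1), w (j + 1) * (m.choose j : ℝ) * natBeta (a + j + 1) (m - j + c)
      + ∑ j ∈ Finset.range (m + 1), w (j + 1) * (m.choose (j + 1) : ℝ) *
          natBeta (a + (j + 1)) (m + 1 - (j + 1) + c) := by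
    unfold clipSum
    rw [Finset.sum_range_succ', hw0, ← Finset.sum_add_distrib]
    simp only [zero_mul, add_zero]
    refine Finset.sum_congr rfl fun j _ => ?_
    rw [Nat.choose_succ_succ, Nat.add_sub_add_right, ← add_assoc]
    push_cast
    ring
  have h2 : ∑ j ∈ Finset.range (m + 1), w (j + 1) * (m.choose (j + 1) : ℝ) *
          natBeta (a + (j + 1)) (m + 1 - (j + 1) + c) =
      ∑ j ∈ Finset.range (m + 1), w j * (m.choose j : ℝ) * natBeta (a + j) (m - j + c + 1) := by
    have h3 := Finset.sum_range_succ' (fun j => w j * (m.choose j : ℝ) *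
          natBeta (a + j) (m + 1 - j + c)) (m + 1)
    rw [Finset.sum_range_succ] at h3
    simp only [hw0, zero_mul, add_zero, Nat.choose_succ_self, Nat.cast_zero, mul_zero] at h3
    rw [← h3]
    refine Finset.sum_congr rfl fun j hj => ?_
    have : m + 1 - j + c = m - j + c + 1 := by
      have := Finset.mem_range.1 hj
      omega
    rw [this]
  rw [h1, h2, ← Finset.sum_add_distrib]
  unfold clipSum
  refine Finset.sum_le_sum fun j _ => ?_
  rw [natBeta_split (a + j) (m - j + c), mul_add]
  have := hw j
  have := natBeta_nonneg (a + j + 1) (m - j + c)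
  gcongr

lemma expected_eq_clipSum (N k m : ℕ) (hN : 2 ≤ N) (hk1 : 1 ≤ k) (hkN : k ≤ N - 1) :
    expectedClippedCoverage N k m =
      clipSum (fun j => min ((j : ℝ) / k) 1) (k - 1) (N - k - 1) m
        / natBeta (k - 1) (N - k - 1) := by
  obtain ⟨a, rfl⟩ : ∃ a, k = a + 1 := ⟨k - 1, by omega⟩
  obtain ⟨c, rfl⟩ : ∃ c, N = a + 1 + c + 1 := ⟨N - (a + 1) - 1, by omega⟩
  have e1 : a + 1 - 1 = a := by omega
  have e2 : a + 1 + c + 1 - (a + 1) - 1 = c := by omega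
  rw [e1, e2]
  unfold expectedClippedCoverage clipSum
  rw [← Finset.sum_div, Beta_eq_natBeta _ _ a c (by push_cast; ring) (by push_cast; ring)]
  congr 1
  rw [Finset.range_eq_Ico, Finset.sum_eq_sum_Ico_succ_bot (by omega)]
  simp only [Nat.cast_zero, zero_div, zero_le_one, min_eq_left, zero_mul, zero_add]
  refine Finset.sum_congr (by ext; simp <;> omega) fun j hj => ?_
  have hj : j ≤ m := by
    simp at hj
    omega
  rw [Beta_eq_natBeta _ _ (a + j) (m - j + c) (by push_cast; ring)
    (by push_cast [Nat.cast_sub hj]; ring)]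

/-- The expected unnormalized Clipped Coverage `E_m` of Lemma 1 is monotone nondecreasing
in the number `m ≥ 1` of synthetic samples. -/
theorem expectedClippedCoverage_monotone
    (N k : ℕ) (hN : 2 ≤ N) (hk1 : 1 ≤ k) (hkN : k ≤ N - 1) :
    ∀ m m' : ℕ, 1 ≤ m → m ≤ m' →
      expectedClippedCoverage N k m ≤ expectedClippedCoverage N k m' := by
  intro m m' _ hmm
  rw [expected_eq_clipSum N k m hN hk1 hkN, expected_eq_clipSum N k m' hN hk1 hkN]
  refine div_le_div_of_nonneg_right ?_ (natBeta_nonneg _ _)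
  refine monotone_nat_of_le_succ (fun n => clipSum_succ _ (by simp) (fun j => ?_) _ _ n) hmm
  push_cast
  gcongr
  linarith
end
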